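/- Let (R, m) be a local ring, M a Cohen-Macaulay R-module of finite injective dimension, and a, b ideals with a ∼_{(0;M)} b. Assume depth R = depth R/a = depth R/b. Then M/aM is Cohen-Macaulay if and only if M/bM is Cohen-Macaulay. -/

import Mathlib

universe u

open RingTheory.Sequence IsLocalRing

/-- The colon submodule `N :_M a = {m ∈ M | a m ⊆ N}`. -/
def Submodule.colonBy {R M : Type*} [CommRing R] [AddCommGroup M] [Module R M]
    (N : Submodule R M) (a : Ideal R) : Submodule R M :=
  ⨅ r ∈ a, N.comap (LinearMap.lsmul R M r)
/-- The `M`-grade of an ideal `c`: the length of a maximal `M`-regular sequence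
with entries in `c`. -/
noncomputable def Module.grade (R : Type*) [CommRing R] (c : Ideal R)
    (M : Type*) [AddCommGroup M] [Module R M] : ℕ :=
  sSup {n | ∃ rs : List R, rs.length = n ∧ (∀ r ∈ rs, r ∈ c) ∧
    RingTheory.Sequence.IsRegular M rs}
/-- The dimension of a module: the Krull dimension of `R / ann M`. -/
noncomputable def Module.dim (R : Type*) [CommRing R]
    (M : Type*) [AddCommGroup M] [Module R M] : WithBot (WithTop ℕ) :=
  ringKrullDim (R ⧸ Module.annihilator R M)

/-- A module over a local ring is Cohen–Macaulay if its depth (the grade of the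
maximal ideal) equals its dimension. -/
def Module.IsCM (R : Type*) [CommRing R] [IsLocalRing R]
    (M : Type*) [AddCommGroup M] [Module R M] : Prop :=
  (Module.grade R (IsLocalRing.maximalIdeal R) M : WithBot (WithTop ℕ)) = Module.dim R M
open CategoryTheory in
/-- A module has finite injective dimension if there is `n` such that
`Ext^i(N, M) = 0` for all modules `N` and all `i > n`. -/
def Module.HasFiniteInjDim (R M : Type u) [CommRing R] [AddCommGroup M] [Module R M] : Prop :=
  ∃ n : ℕ, ∀ (N : ModuleCat.{u} R) (i : ℕ), n < i →
    Subsingleton (((Ext R (ModuleCat.{u} R) i).obj (Opposite.op N)).obj (ModuleCat.of R M))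

/-- A Noetherian local ring is Gorenstein if it has finite injective dimension
as a module over itself. -/
def IsGorensteinLocalRing (S : Type u) [CommRing S] [IsLocalRing S] [IsNoetherianRing S] :
    Prop :=
  Module.HasFiniteInjDim S S

/-!
Put `d = depth R`. Dévissage reduces the vanishing of `Ext^i(-, M)` in degrees `i > d` to the
residue field `k`, and `k` embeds into `R / (r₁, …, r_d)` for a maximal regular sequence, a module
of projective dimension `d`. Cutting `N` down by a regular sequence then gives `Ext^i(N, M) = 0`
for `i > d - depth N` (Ischebeck), so that `depth R/a = d` forces `Ext^i(R/a, M) = 0` for all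
`i > 0`. This makes `0 :_M a = Hom(R/a, M)` commute with the passage from `M` to `M/xM` for
`M`-regular `x`. Hence an `M`-regular sequence stays regular on `M/(0 :_M a)`, whose depth is
therefore at least `depth M = dim M`; so `M/(0 :_M a)` is Cohen–Macaulay, and under linkage this
module is `M/bM`.
-/

open CategoryTheory Abelian

section Ext

universe w v

variable {C : Type u} [Category.{v} C] [Abelian C] [HasExt.{w} C]

lemma subsingleton_ext_of_iso {X X' : C} (e : X ≅ X') {Y : C} {n : ℕ}
    (h : Subsingleton (Ext X' Y n)) : Subsingleton (Ext X Y n) := by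
  refine subsingleton_of_forall_eq 0 fun y ↦ ?_
  rw [← Ext.mk₀_id_comp y, ← e.hom_inv_id, ← Ext.mk₀_comp_mk₀_assoc,
    h.elim ((Ext.mk₀ e.inv).comp y (zero_add n)) 0, Ext.comp_zero]

lemma subsingleton_ext_X₁_left {S : ShortComplex C} (hS : S.ShortExact) {Y : C} {n : ℕ}
    (h₂ : Subsingleton (Ext S.X₂ Y n)) (h₃ : Subsingleton (Ext S.X₃ Y (n + 1))) :
    Subsingleton (Ext S.X₁ Y n) := by
  refine subsingleton_of_forall_eq 0 fun y ↦ ?_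
  obtain ⟨z, rfl⟩ := Ext.contravariant_sequence_exact₁ hS Y y (add_comm 1 n) (h₃.elim _ _)
  rw [h₂.elim z 0, Ext.comp_zero]

lemma subsingleton_ext_X₂_left {S : ShortComplex C} (hS : S.ShortExact) {Y : C} {n : ℕ}
    (h₁ : Subsingleton (Ext S.X₁ Y n)) (h₃ : Subsingleton (Ext S.X₃ Y n)) :
    Subsingleton (Ext S.X₂ Y n) := by
  refine subsingleton_of_forall_eq 0 fun y ↦ ?_
  obtain ⟨z, rfl⟩ := Ext.contravariant_sequence_exact₂ hS Y y (h₁.elim _ _)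
  rw [h₃.elim z 0, Ext.comp_zero]

lemma subsingleton_ext_X₃_right {S : ShortComplex C} (hS : S.ShortExact) {X : C} {n : ℕ}
    (h₂ : Subsingleton (Ext X S.X₂ n)) (h₁ : Subsingleton (Ext X S.X₁ (n + 1))) :
    Subsingleton (Ext X S.X₃ n) := by
  refine subsingleton_of_forall_eq 0 fun y ↦ ?_
  obtain ⟨z, rfl⟩ := Ext.covariant_sequence_exact₃ X hS y rfl (h₁.elim _ _)
  rw [h₂.elim z 0, Ext.zero_comp]

lemma exists_comp_eq_of_subsingleton_ext_one {S : ShortComplex C} (hS : S.ShortExact) {X : C}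
    (h : Subsingleton (Ext X S.X₁ 1)) (φ : X ⟶ S.X₃) : ∃ ψ : X ⟶ S.X₂, ψ ≫ S.g = φ := by
  obtain ⟨y, hy⟩ := Ext.covariant_sequence_exact₃ X hS (Ext.mk₀ φ) (zero_add 1) (h.elim _ _)
  obtain ⟨ψ, rfl⟩ := (Ext.mk₀_bijective _ _).2 y
  rw [Ext.mk₀_comp_mk₀] at hy
  exact ⟨ψ, (Ext.mk₀_bijective _ _).1 hy⟩

lemma subsingleton_abelianExt_of_subsingleton_ext {R : Type*} [Ring R] [Linear R C]
    [EnoughProjectives C] {X Y : C} {n : ℕ}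
    (h : Subsingleton (((_root_.Ext R C (n + 1)).obj (Opposite.op X)).obj Y)) :
    Subsingleton (Abelian.Ext X Y (n + 1)) := by
  let P := projectiveResolution X
  have homology_zero : Limits.IsZero ((P.complex.linearYonedaObj R Y).homology (n + 1)) :=
    (ModuleCat.isZero_of_subsingleton _).of_iso (P.isoExt (n + 1) Y).symm
  rw [← HomologicalComplex.exactAt_iff_isZero_homology,
    HomologicalComplex.exactAt_iff' _ n (n + 1) (n + 2) (by simp) (by simp),
    ShortComplex.moduleCat_exact_iff] at homology_zero
  refine subsingleton_of_forall_eq 0 fun α ↦ ?_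
  obtain ⟨f, hf, rfl⟩ := P.extMk_surjective α (n + 2) rfl
  exact (P.extMk_eq_zero_iff f (n + 2) rfl hf n rfl).mpr (homology_zero f hf)

lemma exists_hasInjectiveDimensionLT_of_hasFiniteInjDim {R M : Type u} [CommRing R]
    [AddCommGroup M] [Module R M] (h : Module.HasFiniteInjDim R M) :
    ∃ d, HasInjectiveDimensionLT (ModuleCat.of R M) d := by
  obtain ⟨d, hd⟩ := h
  refine ⟨d + 1, .mk fun i hi N e ↦ ?_⟩
  obtain ⟨i, rfl⟩ := Nat.exists_eq_add_of_le' (Nat.one_le_of_lt hi)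
  exact (subsingleton_abelianExt_of_subsingleton_ext (hd N _ hi)).elim e 0

end Ext

section Devissage

universe v

variable {R : Type u} [CommRing R]

lemma isSMulRegular_quotient_of_isPrime {p : Ideal R} [hp : p.IsPrime] {x : R} (hx : x ∉ p) :
    IsSMulRegular (R ⧸ p) x :=
  (isSMulRegular_quotient_iff_mem_of_smul_mem p x).mpr fun _ hy ↦
    (hp.mem_or_mem hy).resolve_left hx

variable [IsLocalRing R] [IsNoetherianRing R]

/-- By the long exact sequence `x` acts surjectively on `Ext^n(N, M)`, which therefore vanishes by
Nakayama's lemma. -/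
lemma subsingleton_ext_of_subsingleton_ext_quotSMulTop [Small.{v} R] {N M : ModuleCat.{v} R}
    [Module.Finite R N] [Module.Finite R M] {x : R} (hx : x ∈ maximalIdeal R)
    (hreg : IsSMulRegular N x) {n : ℕ}
    (h : Subsingleton (Ext (ModuleCat.of R (QuotSMulTop x N)) M (n + 1))) :
    Subsingleton (Ext N M n) := by
  have smul_surjective (y : Ext N M n) : ∃ z : Ext N M n, x • z = y := by
    obtain ⟨z, hz⟩ := Ext.contravariant_sequence_exact₁ hreg.smulShortComplex_shortExact M y
      (add_comm 1 n) (h.elim _ _)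
    change Ext N M n at z
    change (Ext.mk₀ (x • 𝟙 N)).comp z (zero_add n) = y at hz
    exact ⟨z, by rw [← hz, Ext.mk₀_smul, Ext.smul_comp, Ext.mk₀_id_comp]⟩
  by_contra! nontrivial_ext
  have mem_jacobson : x ∈ (Module.annihilator R (Ext N M n)).jacobson :=
    maximalIdeal_le_jacobson _ hx
  refine Submodule.top_ne_pointwise_smul_of_mem_jacobson_annihilator mem_jacobson
    (top_le_iff.mp fun y _ ↦ ?_).symm
  obtain ⟨z, rfl⟩ := smul_surjective y
  exact Submodule.smul_mem_pointwise_smul _ _ ⊤ trivial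

lemma subsingleton_ext_of_subsingleton_ext_residueField {M : ModuleCat.{u} R} [Module.Finite R M]
    {n : ℕ} (h : ∀ N : ModuleCat.{u} R, Module.Finite R N → Subsingleton (Ext N M (n + 1)))
    (hk : Subsingleton (Ext (ModuleCat.of R (R ⧸ maximalIdeal R)) M n))
    (N : ModuleCat.{u} R) [hN : Module.Finite R N] : Subsingleton (Ext N M n) := by
  suffices ∀ (N : Type u) [AddCommGroup N] [Module R N], Module.Finite R N →
      Subsingleton (Ext (ModuleCat.of R N) M n) from this N hN
  intro N _ _ hN
  induction hN using IsNoetherianRing.induction_on_isQuotientEquivQuotientPrime R with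
  | subsingleton N =>
    have := (ModuleCat.isZero_of_subsingleton (.of R N)).hasProjectiveDimensionLT_zero
    exact HasProjectiveDimensionLT.subsingleton _ 0 n n.zero_le M
  | quotient N p e =>
    refine subsingleton_ext_of_iso e.toModuleIso ?_
    by_cases hp : p.1 = maximalIdeal R
    · rwa [hp]
    · obtain ⟨x, hxm, hxp⟩ := SetLike.exists_of_lt
        (lt_of_le_of_ne (le_maximalIdeal p.isPrime.ne_top) hp)
      exact subsingleton_ext_of_subsingleton_ext_quotSMulTop hxm
        (isSMulRegular_quotient_of_isPrime hxp) (h _ inferInstance)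
  | exact N₁ N₂ N₃ f g hf hg hfg h₁ h₃ =>
    exact subsingleton_ext_X₂_left (ModuleCat.shortComplex_shortExact
      (ModuleCat.shortComplexOfCompEqZero f g hfg.linearMap_comp_eq_zero) hfg hf hg) h₁ h₃

end Devissage

section Grade

variable {R : Type*} [CommRing R] [IsLocalRing R]
  {M : Type*} [AddCommGroup M] [Module R M] [Module.Finite R M]

variable (R M) in
lemma isCM_iff_grade_eq_supportDim : Module.IsCM R M ↔
    (Module.grade R (maximalIdeal R) M : WithBot ℕ∞) = Module.supportDim R M := by
  rw [Module.supportDim_eq_ringKrullDim_quotient_annihilator]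
  rfl

variable [IsNoetherianRing R]

lemma length_le_supportDim_of_isRegular {rs : List R} (h : IsRegular M rs) :
    (rs.length : WithBot ℕ∞) ≤ Module.supportDim R M := by
  have : Nontrivial (M ⧸ Ideal.ofList rs • (⊤ : Submodule R M)) :=
    Submodule.Quotient.nontrivial_iff.mpr h.2.symm
  have : Nonempty (Module.support R (M ⧸ Ideal.ofList rs • (⊤ : Submodule R M))) :=
    Module.nonempty_support_of_nontrivial.to_subtype
  rw [← Module.supportDim_add_length_eq_supportDim_of_isRegular rs h]
  exact le_add_of_nonneg_left Order.krullDim_nonneg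

variable (M) in
lemma bddAbove_length_isRegular (c : Ideal R) :
    BddAbove {n | ∃ rs : List R, rs.length = n ∧ (∀ r ∈ rs, r ∈ c) ∧ IsRegular M rs} := by
  refine ⟨(LTSeries.longestOf (PrimeSpectrum R)).length, ?_⟩
  rintro _ ⟨rs, rfl, -, h⟩
  have length_le : (rs.length : WithBot ℕ∞) ≤ ringKrullDim R :=
    (length_le_supportDim_of_isRegular h).trans (Module.supportDim_le_ringKrullDim R M)
  rw [ringKrullDim, Order.krullDim_eq_length_of_finiteDimensionalOrder] at length_le
  exact_mod_cast length_le

lemma length_le_grade {c : Ideal R} {rs : List R} (h : IsRegular M rs) (hmem : ∀ r ∈ rs, r ∈ c) :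
    rs.length ≤ Module.grade R c M :=
  le_csSup (bddAbove_length_isRegular M c) ⟨rs, rfl, hmem, h⟩

variable [Nontrivial M]

variable (M) in
lemma exists_isRegular_length_eq_grade (c : Ideal R) :
    ∃ rs : List R, rs.length = Module.grade R c M ∧ (∀ r ∈ rs, r ∈ c) ∧ IsRegular M rs :=
  Nat.sSup_mem (s := {n | ∃ rs : List R, rs.length = n ∧ (∀ r ∈ rs, r ∈ c) ∧ IsRegular M rs})
    ⟨0, [], rfl, by simp, .nil R M⟩ (bddAbove_length_isRegular M c)

variable (M) in
lemma grade_le_supportDim (c : Ideal R) :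
    (Module.grade R c M : WithBot ℕ∞) ≤ Module.supportDim R M := by
  obtain ⟨rs, hlen, -, hreg⟩ := exists_isRegular_length_eq_grade M c
  exact hlen ▸ length_le_supportDim_of_isRegular hreg

lemma not_isSMulRegular_quotient_of_length_eq_grade {rs : List R}
    (hlen : rs.length = Module.grade R (maximalIdeal R) M)
    (hmem : ∀ r ∈ rs, r ∈ maximalIdeal R) (hreg : IsWeaklyRegular M rs) {r : R}
    (hr : r ∈ maximalIdeal R) :
    ¬ IsSMulRegular (M ⧸ Ideal.ofList rs • (⊤ : Submodule R M)) r := fun hr_reg ↦ by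
  have mem_append : ∀ s ∈ rs ++ [r], s ∈ maximalIdeal R := by
    simpa [or_imp, forall_and] using ⟨hmem, hr⟩
  have isRegular_append : IsRegular M (rs ++ [r]) :=
    .of_isWeaklyRegular_of_mem_maximalIdeal M mem_append
      ((isWeaklyRegular_append_iff M rs [r]).mpr
        ⟨hreg, (isWeaklyRegular_singleton_iff _ _).mpr hr_reg⟩)
  simpa [hlen] using length_le_grade isRegular_append mem_append

lemma exists_injective_residueField_of_length_eq_grade {rs : List R}
    (hlen : rs.length = Module.grade R (maximalIdeal R) M)
    (hmem : ∀ r ∈ rs, r ∈ maximalIdeal R) (hreg : IsWeaklyRegular M rs) :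
    ∃ f : (R ⧸ maximalIdeal R) →ₗ[R] M ⧸ Ideal.ofList rs • (⊤ : Submodule R M),
      Function.Injective f := by
  have : Nontrivial ((R ⧸ maximalIdeal R) →ₗ[R] M ⧸ Ideal.ofList rs • (⊤ : Submodule R M)) := by
    rw [← not_subsingleton_iff_nontrivial, IsSMulRegular.subsingleton_linearMap_iff]
    rintro ⟨r, hr, hr_reg⟩
    rw [Ideal.annihilator_quotient] at hr
    exact not_isSMulRegular_quotient_of_length_eq_grade hlen hmem hreg hr hr_reg
  obtain ⟨f, hf⟩ := exists_ne
    (0 : (R ⧸ maximalIdeal R) →ₗ[R] M ⧸ Ideal.ofList rs • (⊤ : Submodule R M))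
  have : IsSimpleModule R (R ⧸ maximalIdeal R) :=
    isSimpleModule_iff_isCoatom.mpr (maximalIdeal.isMaximal R).out
  exact ⟨f, f.injective_or_eq_zero.resolve_right hf⟩

end Grade

section Ischebeck

variable {R : Type u} [CommRing R] [IsLocalRing R] [IsNoetherianRing R] {M : ModuleCat.{u} R}

lemma subsingleton_ext_residueField_of_grade_lt {i : ℕ}
    (h : ∀ N : ModuleCat.{u} R, Module.Finite R N → Subsingleton (Ext N M (i + 1)))
    (hi : Module.grade R (maximalIdeal R) R < i) :
    Subsingleton (Ext (ModuleCat.of R (R ⧸ maximalIdeal R)) M i) := by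
  obtain ⟨rs, hlen, hmem, hreg⟩ := exists_isRegular_length_eq_grade R (maximalIdeal R)
  obtain ⟨f, hf⟩ := exists_injective_residueField_of_length_eq_grade hlen hmem hreg.1
  have projectiveDimension_lt : projectiveDimension
      (ModuleCat.of R (R ⧸ Ideal.ofList rs • (⊤ : Submodule R R))) < i := by
    rw [ModuleCat.projectiveDimension_quotient_eq_add_length_of_isWeaklyRegular (.of R R) rs
      hreg.1 hmem, ModuleCat.projectiveDimension_eq_zero_of_projective, zero_add, hlen]
    exact_mod_cast hi
  rw [projectiveDimension_lt_iff] at projectiveDimension_lt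
  have shortExact := ModuleCat.shortComplex_shortExact
    (ModuleCat.shortComplexOfCompEqZero f _ (LinearMap.range_mkQ_comp f))
    (LinearMap.exact_map_mkQ_range f) hf (Submodule.mkQ_surjective _)
  exact subsingleton_ext_X₁_left shortExact
    (HasProjectiveDimensionLT.subsingleton _ i i le_rfl M) (h (.of R (_ ⧸ f.range)) inferInstance)

variable [Module.Finite R M]

lemma subsingleton_ext_of_grade_lt (d : ℕ) [HasInjectiveDimensionLT M d] {i : ℕ}
    (hi : Module.grade R (maximalIdeal R) R < i) (N : ModuleCat.{u} R) [Module.Finite R N] :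
    Subsingleton (Ext N M i) := by
  obtain ⟨k, hk⟩ : ∃ k, d ≤ i + k := ⟨d, d.le_add_left i⟩
  induction k generalizing i N with
  | zero => exact HasInjectiveDimensionLT.subsingleton M d i hk N
  | succ k ih =>
    have ext_succ (N : ModuleCat.{u} R) (_ : Module.Finite R N) : Subsingleton (Ext N M (i + 1)) :=
      ih (by lia) N (by lia)
    exact subsingleton_ext_of_subsingleton_ext_residueField ext_succ
      (subsingleton_ext_residueField_of_grade_lt ext_succ hi) N

lemma subsingleton_ext_of_grade_lt_add_length (d : ℕ) [HasInjectiveDimensionLT M d] {rs : List R}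
    (hmem : ∀ r ∈ rs, r ∈ maximalIdeal R) {N : ModuleCat.{u} R} [Module.Finite R N]
    (hreg : IsWeaklyRegular N rs) {i : ℕ}
    (hi : Module.grade R (maximalIdeal R) R < i + rs.length) : Subsingleton (Ext N M i) := by
  induction rs generalizing N i with
  | nil => exact subsingleton_ext_of_grade_lt d hi N
  | cons x rs ih =>
    rw [isWeaklyRegular_cons_iff] at hreg
    rw [List.forall_mem_cons] at hmem
    rw [List.length_cons, add_comm rs.length, ← add_assoc] at hi
    exact subsingleton_ext_of_subsingleton_ext_quotSMulTop hmem.1 hreg.1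
      (ih hmem.2 (N := .of R (QuotSMulTop x N)) hreg.2 hi)

lemma subsingleton_ext_of_grade_lt_add_grade (d : ℕ) [HasInjectiveDimensionLT M d]
    {N : ModuleCat.{u} R} [Module.Finite R N] {i : ℕ}
    (hi : Module.grade R (maximalIdeal R) R < i + Module.grade R (maximalIdeal R) N) :
    Subsingleton (Ext N M i) := by
  cases subsingleton_or_nontrivial N with
  | inl _ =>
    have := (ModuleCat.isZero_of_subsingleton N).hasProjectiveDimensionLT_zero
    exact HasProjectiveDimensionLT.subsingleton N 0 i i.zero_le M
  | inr _ =>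
    obtain ⟨rs, hlen, hmem, hreg⟩ := exists_isRegular_length_eq_grade N (maximalIdeal R)
    exact subsingleton_ext_of_grade_lt_add_length d hmem hreg.1 (hlen ▸ hi)

end Ischebeck

section TorsionBySet

open Pointwise

section

variable {R M : Type*} [CommRing R] [AddCommGroup M] [Module R M]

lemma colonBy_bot (a : Ideal R) :
    (⊥ : Submodule R M).colonBy a = Submodule.torsionBySet R M a := by
  ext m
  simp [Submodule.colonBy, Submodule.mem_torsionBySet_iff]

lemma isSMulRegular_quotient_torsionBySet {x : R} (hx : IsSMulRegular M x) (s : Set R) :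
    IsSMulRegular (M ⧸ Submodule.torsionBySet R M s) x := by
  simp only [isSMulRegular_quotient_iff_mem_of_smul_mem, Submodule.mem_torsionBySet_iff]
  exact fun m hm r ↦ hx.right_eq_zero_of_smul (by rw [smul_comm, hm r])

/-- The isomorphism `(M/N)/x(M/N) ≅ (M/xM)/N̄`, where `N̄` is the image of `N` in `M/xM`. It
lets an induction along an `M`-regular sequence pass from `M/N` to a quotient of `M/xM`. -/
def quotSMulTopQuotientEquiv (x : R) (N : Submodule R M) :
    QuotSMulTop x (M ⧸ N) ≃ₗ[R] QuotSMulTop x M ⧸ N.map (Submodule.mkQ (x • ⊤)) :=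
  have map_smul_top : x • (⊤ : Submodule R (M ⧸ N)) = (x • ⊤ : Submodule R M).map N.mkQ := by
    rw [Submodule.map_pointwise_smul, Submodule.map_top, Submodule.range_mkQ]
  Submodule.quotEquivOfEq _ _ map_smul_top ≪≫ₗ
    Submodule.quotientQuotientEquivQuotientSup N (x • ⊤) ≪≫ₗ
    Submodule.quotEquivOfEq _ _ (sup_comm N (x • ⊤)) ≪≫ₗ
    (Submodule.quotientQuotientEquivQuotientSup (x • ⊤) N).symm

end

variable {R : Type u} [CommRing R]

lemma map_torsionBySet_of_subsingleton_ext_one {S : ShortComplex (ModuleCat.{u} R)}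
    (hS : S.ShortExact) {a : Ideal R} (h : Subsingleton (Ext (ModuleCat.of R (R ⧸ a)) S.X₁ 1)) :
    (Submodule.torsionBySet R S.X₂ a).map S.g.hom = Submodule.torsionBySet R S.X₃ a := by
  refine le_antisymm ?_ fun y hy ↦ ?_
  · rintro _ ⟨z, hz, rfl⟩
    rw [SetLike.mem_coe, Submodule.mem_torsionBySet_iff] at hz
    exact (Submodule.mem_torsionBySet_iff _ _).mpr fun r ↦ by rw [← map_smul, hz r, map_zero]
  · rw [Submodule.mem_torsionBySet_iff] at hy
    let φ : (R ⧸ a) →ₗ[R] S.X₃ := Submodule.liftQ a (LinearMap.toSpanSingleton R _ y)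
      fun r hr ↦ hy ⟨r, hr⟩
    obtain ⟨ψ, hψ⟩ := exists_comp_eq_of_subsingleton_ext_one hS h (ModuleCat.ofHom φ)
    refine ⟨ψ.hom (Submodule.Quotient.mk 1), ?_, ?_⟩
    · refine (Submodule.mem_torsionBySet_iff _ _).mpr fun r ↦ ?_
      have smul_one : (r : R) • (Submodule.Quotient.mk 1 : R ⧸ a) = 0 := by
        rw [← Submodule.Quotient.mk_smul, Submodule.Quotient.mk_eq_zero, smul_eq_mul, mul_one]
        exact r.2
      rw [← map_smul, smul_one, map_zero]
    · calc S.g.hom (ψ.hom (Submodule.Quotient.mk 1))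
        _ = φ (Submodule.Quotient.mk 1) := ConcreteCategory.congr_hom hψ _
        _ = y := one_smul R y

lemma isWeaklyRegular_quotient_torsionBySet {a : Ideal R} {M : Type u} [AddCommGroup M]
    [Module R M] (h : ∀ i, Subsingleton (Ext (ModuleCat.of R (R ⧸ a)) (ModuleCat.of R M) (i + 1)))
    {rs : List R} (hreg : IsWeaklyRegular M rs) :
    IsWeaklyRegular (M ⧸ Submodule.torsionBySet R M a) rs := by
  induction rs generalizing M with
  | nil => exact .nil R _
  | cons x rs ih =>
    rw [isWeaklyRegular_cons_iff] at hreg ⊢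
    obtain ⟨hx, hrs⟩ := hreg
    have shortExact : ((ModuleCat.of R M).smulShortComplex x).ShortExact :=
      hx.smulShortComplex_shortExact
    have ext_quotSMulTop (i : ℕ) :
        Subsingleton (Ext (ModuleCat.of R (R ⧸ a)) (ModuleCat.of R (QuotSMulTop x M)) (i + 1)) :=
      subsingleton_ext_X₃_right shortExact (h i) (h (i + 1))
    have map_mkQ : (Submodule.torsionBySet R M a).map (Submodule.mkQ (x • ⊤)) =
        Submodule.torsionBySet R (QuotSMulTop x M) a :=
      map_torsionBySet_of_subsingleton_ext_one shortExact (h 0)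
    refine ⟨isSMulRegular_quotient_torsionBySet hx _, ?_⟩
    rw [(quotSMulTopQuotientEquiv x _).isWeaklyRegular_congr, map_mkQ]
    exact ih ext_quotSMulTop hrs

end TorsionBySet

section CohenMacaulay

lemma isCM_quotient_of_grade_le {R : Type*} [CommRing R] [IsLocalRing R] [IsNoetherianRing R]
    {M : Type*} [AddCommGroup M] [Module R M] [Module.Finite R M] (hM : Module.IsCM R M)
    {N : Submodule R M} (hN : N ≠ ⊤)
    (h : Module.grade R (maximalIdeal R) M ≤ Module.grade R (maximalIdeal R) (M ⧸ N)) :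
    Module.IsCM R (M ⧸ N) := by
  have : Nontrivial (M ⧸ N) := Submodule.Quotient.nontrivial_iff.mpr hN
  rw [isCM_iff_grade_eq_supportDim] at hM ⊢
  refine (grade_le_supportDim (M ⧸ N) _).antisymm ?_
  calc Module.supportDim R (M ⧸ N)
    _ ≤ Module.supportDim R M := Module.supportDim_le_of_surjective _ N.mkQ_surjective
    _ = Module.grade R (maximalIdeal R) M := hM.symm
    _ ≤ Module.grade R (maximalIdeal R) (M ⧸ N) := by exact_mod_cast h

variable {R M : Type u} [CommRing R] [IsLocalRing R] [IsNoetherianRing R]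
  [AddCommGroup M] [Module R M] [Module.Finite R M]

lemma grade_le_grade_quotient_torsionBySet (hMinj : Module.HasFiniteInjDim R M) {a : Ideal R}
    (ha : Submodule.torsionBySet R M a ≠ ⊤)
    (hdepth : Module.grade R (maximalIdeal R) R ≤ Module.grade R (maximalIdeal R) (R ⧸ a)) :
    Module.grade R (maximalIdeal R) M ≤
      Module.grade R (maximalIdeal R) (M ⧸ Submodule.torsionBySet R M a) := by
  have := Submodule.Quotient.nontrivial_iff.mpr ha
  have : Nontrivial M := (Submodule.torsionBySet R M a).mkQ_surjective.nontrivial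
  obtain ⟨d, _⟩ := exists_hasInjectiveDimensionLT_of_hasFiniteInjDim hMinj
  have ext_vanish (i : ℕ) :
      Subsingleton (Ext (ModuleCat.of R (R ⧸ a)) (ModuleCat.of R M) (i + 1)) :=
    have depth_lt : Module.grade R (maximalIdeal R) R <
        i + 1 + Module.grade R (maximalIdeal R) (R ⧸ a) := by lia
    subsingleton_ext_of_grade_lt_add_grade d depth_lt
  obtain ⟨rs, hlen, hmem, hreg⟩ := exists_isRegular_length_eq_grade M (maximalIdeal R)
  have hreg_quot : IsRegular (M ⧸ Submodule.torsionBySet R M a) rs :=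
    .of_isWeaklyRegular_of_mem_maximalIdeal _ hmem
      (isWeaklyRegular_quotient_torsionBySet ext_vanish hreg.1)
  exact hlen ▸ length_le_grade hreg_quot hmem

theorem cm_quot_iff_of_linked_general (hMCM : Module.IsCM R M) (hMinj : Module.HasFiniteInjDim R M)
    {a : Ideal R} (ha : (⊥ : Submodule R M).colonBy a ≠ ⊤)
    (hdepth : Module.grade R (maximalIdeal R) R ≤ Module.grade R (maximalIdeal R) (R ⧸ a)) :
    Module.IsCM R (M ⧸ (⊥ : Submodule R M).colonBy a) := by
  rw [colonBy_bot] at ha ⊢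
  exact isCM_quotient_of_grade_le hMCM ha (grade_le_grade_quotient_torsionBySet hMinj ha hdepth)

end CohenMacaulay

/-- Let `(R, m)` be a local ring, `M` a Cohen–Macaulay module of finite injective
dimension, and `a ∼_{(0;M)} b`.  If `depth R = depth R/a = depth R/b`, then `M/aM` is
Cohen–Macaulay iff `M/bM` is Cohen–Macaulay. -/
theorem cm_quot_iff_of_linked {R M : Type u} [CommRing R] [IsLocalRing R] [IsNoetherianRing R]
    [AddCommGroup M] [Module R M] [Module.Finite R M]
    (hMCM : Module.IsCM R M) (hMinj : Module.HasFiniteInjDim R M)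
    (a b : Ideal R)
    (hab : (⊥ : Submodule R M).colonBy a = b • ⊤ ∧ (⊥ : Submodule R M).colonBy b = a • ⊤)
    (haM : a • (⊤ : Submodule R M) ≠ ⊤) (hbM : b • (⊤ : Submodule R M) ≠ ⊤)
    (hdeptha : Module.grade R (maximalIdeal R) R = Module.grade R (maximalIdeal R) (R ⧸ a))
    (hdepthb : Module.grade R (maximalIdeal R) R = Module.grade R (maximalIdeal R) (R ⧸ b)) :
    Module.IsCM R (M ⧸ (a • ⊤ : Submodule R M)) ↔
      Module.IsCM R (M ⧸ (b • ⊤ : Submodule R M)) :=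
  iff_of_true
    (hab.2 ▸ cm_quot_iff_of_linked_general hMCM hMinj (hab.2 ▸ haM) hdepthb.le)
    (hab.1 ▸ cm_quot_iff_of_linked_general hMCM hMinj (hab.1 ▸ hbM) hdeptha.le)
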